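/- arXiv:2006.03363 — 6 statements merged into one kernel-verified Lean document; each statement's English description precedes it below -/
import Mathlib

section
/- Let an acyclic binary causal model be given. For every context u : U → Bool, every subset W ⊆ V, and every prescription w : V → Bool, there exists exactly one assignment v' : V → Bool such that v' i = w i for every i ∈ W and v' i = F i u v' for every i ∉ W. (In particular, taking W = ∅, the model has a unique actual evaluation for each context.) -/
/-- In an acyclic binary causal model, for every context `u`,
every subset `W ⊆ V` and every prescription `w`, there is exactly one
assignment `v'` that equals `w` on `W` and follows the structural equations
outside `W`. -/
theorem unique_solution
    {U V : Type*} [Fintype U] [Fintype V]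
    (F : V → (U → Bool) → (V → Bool) → Bool)
    (r : V → V → Prop) (hwf : WellFounded r)
    (hdep : ∀ (i : V) (u : U → Bool) (w w' : V → Bool),
      (∀ j, r j i → w j = w' j) → F i u w = F i u w')
    (u : U → Bool) (W : Set V) (w : V → Bool) :
    ∃! v' : V → Bool,
      (∀ i ∈ W, v' i = w i) ∧ (∀ i ∉ W, v' i = F i u v') := by
  classical
  let G : (i : V) → ((j : V) → r j i → Bool) → Bool := fun i ih =>
    if i ∈ W then w i else F i u (fun j => if h : r j i then ih j h else false)
  have hfix : ∀ i, hwf.fix G i = G i (fun j _ => hwf.fix G j) := fun i => hwf.fix_eq G i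
  refine ⟨hwf.fix G, ⟨?_, ?_⟩, ?_⟩
  · intro i hi
    rw [hfix]
    simp only [G, if_pos hi]
  · intro i hi
    rw [hfix]
    simp only [G, if_neg hi]
    apply hdep
    intro j hj
    simp only [dif_pos hj]
  · rintro v ⟨h1, h2⟩
    funext i
    induction i using hwf.induction with
    | _ i ih =>
      rw [hfix]
      by_cases hi : i ∈ W
      · simp only [G, if_pos hi]
        exact h1 i hi
      · simp only [G, if_neg hi]
        rw [h2 i hi]
        apply hdep
        intro j hj
        simp only [dif_pos hj]
        exact ih j hj
end

section
/- Theorem (soundness of the ILP/MaxSAT checking encoding): There exists an assignment v' : V → Bool satisfying formula G (i.e. φ v' = false and for every i ∉ X either v' i = F i u v' or v' i = v i) with v' i ≠ v i for at least one i ∈ X, if and only if there exists a nonempty subset S ⊆ X such that condition AC2 holds for S. -/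
/-- Condition AC2 for a candidate cause `X`. -/
def AC2 {U V : Type*} (F : V → (U → Bool) → (V → Bool) → Bool)
    (u : U → Bool) (v : V → Bool) (φ : (V → Bool) → Bool) (X : Set V) : Prop :=
  ∃ (W : Set V) (v' : V → Bool), W ∩ X = ∅ ∧ φ v' = false ∧
    (∀ i ∈ X, v' i = !(v i)) ∧ (∀ i ∈ W, v' i = v i) ∧
    (∀ i ∉ X ∪ W, v' i = F i u v')

/-- soundness of the ILP/MaxSAT checking encoding: formula `G`
has a solution flipping at least one variable of `X` iff AC2 holds for some
nonempty subset of `X`. -/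
theorem formulaG_sat_iff_AC2_subset
    {U V : Type*} [Fintype U] [Fintype V]
    (F : V → (U → Bool) → (V → Bool) → Bool)
    (r : V → V → Prop) (hwf : WellFounded r)
    (hdep : ∀ (i : V) (u : U → Bool) (w w' : V → Bool),
      (∀ j, r j i → w j = w' j) → F i u w = F i u w')
    (u : U → Bool) (v : V → Bool) (hv : ∀ i, v i = F i u v)
    (φ : (V → Bool) → Bool) (hφ : φ v = true) (X : Set V) :
    (∃ v' : V → Bool, φ v' = false ∧
        (∀ i ∉ X, v' i = F i u v' ∨ v' i = v i) ∧
        (∃ i ∈ X, v' i ≠ v i)) ↔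
      (∃ S : Set V, S ⊆ X ∧ S.Nonempty ∧ AC2 F u v φ S) := by
  constructor
  · rintro ⟨v', h1, h2, i, hi, hne⟩
    refine ⟨{i | i ∈ X ∧ v' i ≠ v i}, fun j hj => hj.1, ⟨i, hi, hne⟩,
      {i | v' i = v i}, v', ?_, h1, ?_, fun j hj => hj, ?_⟩
    · ext j
      simp only [Set.mem_inter_iff, Set.mem_setOf_eq, Set.mem_empty_iff_false, iff_false]
      exact fun h => h.2.2 h.1
    · rintro j ⟨_, hj⟩
      revert hj
      cases v' j <;> cases v j <;> simp
    · intro j hj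
      have hW : ¬ v' j = v j := fun h => hj (Or.inr h)
      have hX : j ∉ X := fun h => hj (Or.inl ⟨h, hW⟩)
      exact (h2 j hX).resolve_right hW
  · rintro ⟨S, hS, ⟨i, hi⟩, W, v', _, h1, h2, h3, h4⟩
    refine ⟨v', h1, ?_, i, hS hi, ?_⟩
    · intro j hj
      by_cases hW : j ∈ W
      · exact Or.inr (h3 j hW)
      · exact Or.inl (h4 j (fun h => h.elim (fun h => hj (hS h)) hW))
    · rw [h2 i hi]
      cases v i <;> simp
end

section
/- (Counterfactual worlds contain a genuine cause variable.) Let v' : V → Bool be any assignment with φ v' = false. Then there exists a variable i ∈ V such that v' i ≠ v i and v' i ≠ F i u v', i.e. some variable deviates both from its actual value and from the value prescribed by its structural equation. -/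
/-- in any counterfactual world (an assignment falsifying the
effect), some variable deviates both from its actual value and from the value
prescribed by its structural equation. -/
theorem counterfactual_has_cause_variable
    {U V : Type*} [Fintype U] [Fintype V]
    (F : V → (U → Bool) → (V → Bool) → Bool)
    (r : V → V → Prop) (hwf : WellFounded r)
    (hdep : ∀ (i : V) (u : U → Bool) (w w' : V → Bool),
      (∀ j, r j i → w j = w' j) → F i u w = F i u w')
    (u : U → Bool) (v : V → Bool) (hv : ∀ i, v i = F i u v)
    (φ : (V → Bool) → Bool) (hφ : φ v = true)
    (v' : V → Bool) (h1 : φ v' = false) :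
    ∃ i : V, v' i ≠ v i ∧ v' i ≠ F i u v' := by
  by_contra hcon
  have key : ∀ i, v' i = v i := by
    intro i
    induction i using hwf.induction with
    | _ i ih =>
      by_contra hne
      apply hcon
      refine ⟨i, hne, ?_⟩
      rw [hdep i u v' v ih, ← hv i]
      exact hne
  have heq : v' = v := funext key
  rw [heq, hφ] at h1
  cases h1
end

section
/- (The non-emptiness hard clauses of the MaxSAT encoding are automatically satisfied.) If an assignment v' : V → Bool satisfies formula G for the candidate cause X (i.e. φ v' = false and for every i ∉ X either v' i = F i u v' or v' i = v i), then there exists i ∈ X with v' i ≠ v i and v' i ≠ F i u v'; in particular the distance set {i ∈ X : v' i ≠ v i} of any G-solution is nonempty. -/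
/-- the non-emptiness hard clauses of the MaxSAT encoding are
automatically satisfied: any solution of formula `G` for candidate cause `X`
flips some variable of `X` away from both its actual value and its equation
value; in particular the distance set of a `G`-solution is nonempty. -/
theorem G_solution_nonempty_cause
    {U V : Type*} [Fintype U] [Fintype V]
    (F : V → (U → Bool) → (V → Bool) → Bool)
    (r : V → V → Prop) (hwf : WellFounded r)
    (hdep : ∀ (i : V) (u : U → Bool) (w w' : V → Bool),
      (∀ j, r j i → w j = w' j) → F i u w = F i u w')
    (u : U → Bool) (v : V → Bool) (hv : ∀ i, v i = F i u v)
    (φ : (V → Bool) → Bool) (hφ : φ v = true) (X : Set V)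
    (v' : V → Bool)
    (h1 : φ v' = false)
    (h2 : ∀ i ∉ X, v' i = F i u v' ∨ v' i = v i) :
    (∃ i ∈ X, v' i ≠ v i ∧ v' i ≠ F i u v') ∧
    ({i : V | i ∈ X ∧ v' i ≠ v i} : Set V).Nonempty := by
  have key : ∃ i ∈ X, v' i ≠ v i ∧ v' i ≠ F i u v' := by
    by_contra hcon
    have hall : ∀ i, v' i = v i := by
      intro i
      induction i using hwf.induction with
      | _ i ih =>
        have hF : F i u v' = v i := (hdep i u v' v ih).trans (hv i).symm
        by_contra hne
        by_cases hX : i ∈ X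
        · exact hcon ⟨i, hX, hne, fun h => hne (h.trans hF)⟩
        · rcases h2 i hX with h | h
          · exact hne (h.trans hF)
          · exact hne h
    have : v' = v := funext hall
    rw [this, hφ] at h1
    exact Bool.noConfusion h1
  obtain ⟨i, hX, hne, hF⟩ := key
  exact ⟨⟨i, hX, hne, hF⟩, ⟨i, hX, hne⟩⟩
end

section
/- (Inference soundness, forward direction.) Suppose an assignment v' : V → Bool satisfies formula G* (i.e. φ v' = false and v' i = F i u v' for every i ∈ E). Then the set S := {i ∈ V : v' i ≠ v i and v' i ≠ F i u v'} is nonempty and disjoint from E, the set W := {i ∈ V : v' i = v i and v' i ≠ F i u v'} is disjoint from both S and E, and the pair (W, v') witnesses condition AC2 for S. -/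
/-- inference soundness, forward direction: from a solution `v'`
of formula `G*`, the sets `S` (variables deviating from both actual value and
equation) and `W` (variables keeping the actual value but not the equation)
give a nonempty cause `S` disjoint from the effect variables `E`, a
contingency set `W` disjoint from `S` and `E`, and `(W, v')` witnesses AC2
for `S`. -/
theorem inference_forward
    {U V : Type*} [Fintype U] [Fintype V]
    (F : V → (U → Bool) → (V → Bool) → Bool)
    (r : V → V → Prop) (hwf : WellFounded r)
    (hdep : ∀ (i : V) (u : U → Bool) (w w' : V → Bool),
      (∀ j, r j i → w j = w' j) → F i u w = F i u w')
    (u : U → Bool) (v : V → Bool) (hv : ∀ i, v i = F i u v)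
    (φ : (V → Bool) → Bool) (hφ : φ v = true)
    (E : Set V)
    (hE : ∀ a b : V → Bool, (∀ i ∈ E, a i = b i) → φ a = φ b)
    (v' : V → Bool)
    (h1 : φ v' = false)
    (h2 : ∀ i ∈ E, v' i = F i u v') :
    ({i : V | v' i ≠ v i ∧ v' i ≠ F i u v'} : Set V).Nonempty ∧
    {i : V | v' i ≠ v i ∧ v' i ≠ F i u v'} ∩ E = ∅ ∧
    {i : V | v' i = v i ∧ v' i ≠ F i u v'} ∩
      {i : V | v' i ≠ v i ∧ v' i ≠ F i u v'} = ∅ ∧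
    {i : V | v' i = v i ∧ v' i ≠ F i u v'} ∩ E = ∅ ∧
    φ v' = false ∧
    (∀ i ∈ {i : V | v' i ≠ v i ∧ v' i ≠ F i u v'}, v' i = !(v i)) ∧
    (∀ i ∈ {i : V | v' i = v i ∧ v' i ≠ F i u v'}, v' i = v i) ∧
    (∀ i ∉ {i : V | v' i ≠ v i ∧ v' i ≠ F i u v'} ∪
        {i : V | v' i = v i ∧ v' i ≠ F i u v'}, v' i = F i u v') := by
  refine ⟨?_, ?_, ?_, ?_, h1, ?_, ?_, ?_⟩
  · by_contra hne
    have hS : ∀ i, v' i ≠ v i → v' i = F i u v' := by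
      intro i hi
      by_contra hc
      exact hne ⟨i, hi, hc⟩
    have hall : ∀ i, v' i = v i := by
      intro i
      induction i using hwf.induction with
      | _ i ih =>
        by_contra hi
        apply hi
        rw [hS i hi, hv i]
        exact hdep i u v' v ih
    have hvv : v' = v := funext hall
    rw [hvv, hφ] at h1
    exact Bool.noConfusion h1
  · ext i
    simp only [Set.mem_inter_iff, Set.mem_setOf_eq, Set.mem_empty_iff_false, iff_false]
    rintro ⟨⟨_, h⟩, hi⟩
    exact h (h2 i hi)
  · ext i
    simp only [Set.mem_inter_iff, Set.mem_setOf_eq, Set.mem_empty_iff_false, iff_false]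
    rintro ⟨⟨h, _⟩, h', _⟩
    exact h' h
  · ext i
    simp only [Set.mem_inter_iff, Set.mem_setOf_eq, Set.mem_empty_iff_false, iff_false]
    rintro ⟨⟨_, h⟩, hi⟩
    exact h (h2 i hi)
  · rintro i ⟨h, _⟩
    revert h
    cases v' i <;> cases v i <;> simp
  · rintro i ⟨h, _⟩
    exact h
  · intro i hi
    by_contra hc
    apply hi
    by_cases h : v' i = v i
    · exact Or.inr ⟨h, hc⟩
    · exact Or.inl ⟨h, hc⟩
end

section
/- Theorem (soundness of the inference encoding): Formula G* is satisfiable — i.e. there exists an assignment v' : V → Bool with φ v' = false and v' i = F i u v' for every i ∈ E — if and only if there exist a nonempty set X ⊆ V \ E and a set W ⊆ V \ (X ∪ E) such that condition AC2 holds for X witnessed by the contingency set W (so that in the witness every effect variable follows its structural equation). -/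
/-- soundness of the inference encoding: formula `G*` is
satisfiable iff there are a nonempty cause set `X ⊆ V \ E` and a contingency
set `W ⊆ V \ (X ∪ E)` such that AC2 holds for `X` witnessed by `W`. -/
theorem inference_encoding_sound
    {U V : Type*} [Fintype U] [Fintype V]
    (F : V → (U → Bool) → (V → Bool) → Bool)
    (r : V → V → Prop) (hwf : WellFounded r)
    (hdep : ∀ (i : V) (u : U → Bool) (w w' : V → Bool),
      (∀ j, r j i → w j = w' j) → F i u w = F i u w')
    (u : U → Bool) (v : V → Bool) (hv : ∀ i, v i = F i u v)
    (φ : (V → Bool) → Bool) (hφ : φ v = true)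
    (E : Set V)
    (hE : ∀ a b : V → Bool, (∀ i ∈ E, a i = b i) → φ a = φ b) :
    (∃ v' : V → Bool, φ v' = false ∧ ∀ i ∈ E, v' i = F i u v') ↔
    (∃ X W : Set V, X.Nonempty ∧ X ∩ E = ∅ ∧ W ∩ (X ∪ E) = ∅ ∧
      ∃ v' : V → Bool, φ v' = false ∧
        (∀ i ∈ X, v' i = !(v i)) ∧
        (∀ i ∈ W, v' i = v i) ∧
        (∀ i ∉ X ∪ W, v' i = F i u v')) := by
  constructor
  · rintro ⟨v', h1, h2⟩
    refine ⟨{i | i ∉ E ∧ v' i ≠ v i}, {i | i ∉ E ∧ v' i = v i}, ?_, ?_, ?_, v', h1, ?_, ?_, ?_⟩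
    · by_contra hne
      have hout : ∀ i, i ∉ E → v' i = v i := by
        intro i hi
        by_contra hc
        exact hne ⟨i, hi, hc⟩
      have heq : ∀ i, v' i = v i := by
        intro i
        induction i using hwf.induction with
        | _ i ih =>
          by_cases hi : i ∈ E
          · rw [h2 i hi, hv i]
            exact hdep i u v' v ih
          · exact hout i hi
      have : v' = v := funext heq
      rw [this, hφ] at h1
      exact absurd h1 (by simp)
    · ext i
      simp only [Set.mem_inter_iff, Set.mem_setOf_eq, Set.mem_empty_iff_false]
      tauto
    · ext i
      simp only [Set.mem_inter_iff, Set.mem_union, Set.mem_setOf_eq, Set.mem_empty_iff_false]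
      tauto
    · rintro i ⟨_, hi⟩
      exact Bool.eq_not_of_ne hi
    · rintro i ⟨_, hi⟩
      exact hi
    · intro i hi
      apply h2
      by_contra hc
      apply hi
      by_cases h : v' i = v i
      · exact Or.inr ⟨hc, h⟩
      · exact Or.inl ⟨hc, h⟩
  · rintro ⟨X, W, _, hX, hW, v', h1, _, _, h4⟩
    refine ⟨v', h1, fun i hi => h4 i ?_⟩
    rintro (h | h)
    · have : i ∈ X ∩ E := ⟨h, hi⟩
      rw [hX] at this
      exact this
    · have : i ∈ W ∩ (X ∪ E) := ⟨h, Or.inr hi⟩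
      rw [hW] at this
      exact this
end
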